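/- Assume hypothesis (H) and fix a straight mesh on [a,c]. Then there exists a unique ν* > 0 such that ũ_{ν*}(c) = u_b. -/

import Mathlib

/-!
The difference `w` of two scheme solutions satisfies `w'' ≥ 0` wherever `w ≥ 0`, because hypothesis
(H) makes the coefficients `α_i` nonnegative and monotone in the data at the mesh points. A positive
initial slope therefore never decreases, so `ũ_ν(c)` grows at least linearly in `ν`. Grönwall's
inequality on each mesh subinterval shows that `ũ_ν(c)` depends continuously on `ν`; since
`ũ_0(c) = 0`, the value `u_b` is attained, and only once.
-/

open Set Filter

noncomputable section

/-- Partial derivative of a two-argument function with respect to its first argument. -/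
def pd1 (f : ℝ → ℝ → ℝ) (u x : ℝ) : ℝ := deriv (fun t => f t x) u

/-- Partial derivative of a two-argument function with respect to its second argument. -/
def pd2 (f : ℝ → ℝ → ℝ) (u x : ℝ) : ℝ := deriv (fun s => f u s) x

/-- The nonlinearity `𝒩(u,x) = N(u,x)·u`. -/
def Ncal (N : ℝ → ℝ → ℝ) (u x : ℝ) : ℝ := N u x * u

/-- `u` is twice continuously differentiable on `s`, with first derivative `u'`
and second derivative `u''` (derivatives within `s`). -/
def IsC2On (u u' u'' : ℝ → ℝ) (s : Set ℝ) : Prop :=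
  (∀ x ∈ s, HasDerivWithinAt u (u' x) s x) ∧
  (∀ x ∈ s, HasDerivWithinAt u' (u'' x) s x) ∧
  ContinuousOn u'' s

/-- The straight boundary value problem: `u ∈ C²([a,b])`, `u'' = 𝒩(u(x),x)` on `[a,b]`,
`u(a) = 0`, `u(b) = ub`. -/
def IsStraightBVP (N : ℝ → ℝ → ℝ) (a b ub : ℝ) (u u' u'' : ℝ → ℝ) : Prop :=
  IsC2On u u' u'' (Icc a b) ∧
  (∀ x ∈ Icc a b, u'' x = Ncal N (u x) x) ∧
  u a = 0 ∧ u b = ub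

/-- Hypothesis (H): `N`, `∂N/∂x`, `∂N/∂u`, `∂²N/∂x∂u`, `∂²N/∂u²` are all
nonnegative for `u ≥ 0` and `x ∈ [a,b]`. -/
def HypH (N : ℝ → ℝ → ℝ) (a b : ℝ) : Prop :=
  ∀ u : ℝ, 0 ≤ u → ∀ x ∈ Icc a b,
    0 ≤ N u x ∧ 0 ≤ pd2 N u x ∧ 0 ≤ pd1 N u x ∧
    0 ≤ pd2 (pd1 N) u x ∧ 0 ≤ pd1 (pd1 N) u x

/-- A mesh: finitely many strictly increasing points `pt 0 < pt 1 < ⋯ < pt n`. -/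
structure Mesh where
  n : ℕ
  pt : ℕ → ℝ
  npos : 0 < n
  mono : ∀ i < n, pt i < pt (i + 1)

/-- The coefficient `α_i(p,q,x)` of the straight discretized equation,
where `xi` is the mesh point `x_i`. -/
def alphaC (N : ℝ → ℝ → ℝ) (xi p q x : ℝ) : ℝ :=
  (pd1 N q xi * p + pd2 N q xi) * (x - xi) + N q xi

/-- The coefficient `β_i(p,q,v)` of the inverse discretized equation,
where `ui` is the (shifted) mesh point `ū_i`. -/
def betaC (N : ℝ → ℝ → ℝ) (ui p q v : ℝ) : ℝ :=
  -(pd1 (Ncal N) ui q + pd2 (Ncal N) ui q * p) * (v - ui) - Ncal N ui q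

/-- Shifted mesh knots `ū_i = max(u_i, s)`. -/
def ubar (m : Mesh) (s : ℝ) (i : ℕ) : ℝ := max (m.pt i) s

/-- A straight scheme solution on `[a,c]` with respect to the mesh `m`:
`ũ ∈ C¹([a,c])` and on each mesh subinterval `[x_i, x_{i+1}]` the second
derivative of `ũ` equals `α_i(ũ'(x_i), ũ(x_i), x)·ũ(x)`. -/
def IsStraightSol (N : ℝ → ℝ → ℝ) (a c : ℝ) (m : Mesh) (u u' : ℝ → ℝ) : Prop :=
  (∀ x ∈ Icc a c, HasDerivWithinAt u (u' x) (Icc a c) x) ∧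
  ContinuousOn u' (Icc a c) ∧
  ∀ i < m.n, ∀ x ∈ Icc (m.pt i) (m.pt (i + 1)),
    HasDerivWithinAt u'
      (alphaC N (m.pt i) (u' (m.pt i)) (u (m.pt i)) x * u x)
      (Icc (m.pt i) (m.pt (i + 1))) x

/-- An inverse scheme solution on `[s, ub]` with respect to the mesh `m` (shifted by `s`):
`x̃ ∈ C¹([s,ub])` and on each subinterval `[ū_i, ū_{i+1}]` the second derivative of `x̃`
equals `β_i(x̃'(ū_i), x̃(ū_i), v)·(x̃'(v))³`. -/
def IsInvSol (N : ℝ → ℝ → ℝ) (ub : ℝ) (m : Mesh) (s : ℝ) (X X' : ℝ → ℝ) : Prop :=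
  (∀ v ∈ Icc s ub, HasDerivWithinAt X (X' v) (Icc s ub) v) ∧
  ContinuousOn X' (Icc s ub) ∧
  ∀ i < m.n, ∀ v ∈ Icc (ubar m s i) (ubar m s (i + 1)),
    HasDerivWithinAt X'
      (betaC N (ubar m s i) (X' (ubar m s i)) (X (ubar m s i)) v * (X' v) ^ 3)
      (Icc (ubar m s i) (ubar m s (i + 1))) v

/-- A scheme pair `(ũ, x̃)`. -/
def IsSchemePair (N : ℝ → ℝ → ℝ) (a b c ub : ℝ) (ms mi : Mesh)
    (u u' X X' : ℝ → ℝ) : Prop :=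
  IsStraightSol N a c ms u u' ∧ u a = 0 ∧ 0 < u c ∧ u c < ub ∧ u' c ≠ 0 ∧
  IsInvSol N ub mi (u c) X X' ∧ X ub = b ∧ X (u c) = c ∧ X' (u c) = 1 / u' c

/-- A scheme pair additionally satisfying the sign inequalities
`0 < ũ < u_b`, `ũ' > 0`, `ũ'' ≥ 0` on `(a,c]`, and `c < x̃`, `x̃' > 0`, `x̃'' ≤ 0`
on `(ũ(c), u_b]` (second derivatives taken on the mesh subintervals). -/
def GoodPair (N : ℝ → ℝ → ℝ) (a b c ub : ℝ) (ms mi : Mesh)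
    (u u' X X' : ℝ → ℝ) : Prop :=
  IsSchemePair N a b c ub ms mi u u' X X' ∧
  (∀ x ∈ Ioc a c, 0 < u x ∧ u x < ub ∧ 0 < u' x) ∧
  (∀ i < ms.n, ∀ x ∈ Icc (ms.pt i) (ms.pt (i + 1)), x ∈ Ioc a c →
    0 ≤ alphaC N (ms.pt i) (u' (ms.pt i)) (u (ms.pt i)) x * u x) ∧
  (∀ v ∈ Ioc (u c) ub, c < X v ∧ 0 < X' v) ∧
  (∀ i < mi.n, ∀ v ∈ Icc (ubar mi (u c) i) (ubar mi (u c) (i + 1)), v ∈ Ioc (u c) ub →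
    betaC N (ubar mi (u c) i) (X' (ubar mi (u c) i)) (X (ubar mi (u c) i)) v * (X' v) ^ 3 ≤ 0)

/-- All steps of the straight mesh `ms` and of the (shifted) inverse mesh `mi`
are of size at most `h`. -/
def StepLe (ms mi : Mesh) (s h : ℝ) : Prop :=
  (∀ i < ms.n, ms.pt (i + 1) - ms.pt i ≤ h) ∧
  (∀ i < mi.n, ubar mi s (i + 1) - ubar mi s i ≤ h)

section PartialDerivatives

variable {f : ℝ → ℝ → ℝ}

theorem hasDerivAt_left_fderiv {u x : ℝ} (hf : DifferentiableAt ℝ (Function.uncurry f) (u, x)) :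
    HasDerivAt (fun t => f t x) (fderiv ℝ (Function.uncurry f) (u, x) (1, 0)) u :=
  hf.hasFDerivAt.comp_hasDerivAt (f := fun t => (t, x)) u
    ((hasDerivAt_id u).prodMk (hasDerivAt_const u x))

theorem hasDerivAt_right_fderiv {u x : ℝ} (hf : DifferentiableAt ℝ (Function.uncurry f) (u, x)) :
    HasDerivAt (fun s => f u s) (fderiv ℝ (Function.uncurry f) (u, x) (0, 1)) x :=
  hf.hasFDerivAt.comp_hasDerivAt (f := fun s => (u, s)) x
    ((hasDerivAt_const x u).prodMk (hasDerivAt_id x))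

theorem uncurry_pd1_eq_fderiv (hf : Differentiable ℝ (Function.uncurry f)) :
    Function.uncurry (pd1 f) = fun z => fderiv ℝ (Function.uncurry f) z (1, 0) :=
  funext fun z => (hasDerivAt_left_fderiv (hf z)).deriv

theorem uncurry_pd2_eq_fderiv (hf : Differentiable ℝ (Function.uncurry f)) :
    Function.uncurry (pd2 f) = fun z => fderiv ℝ (Function.uncurry f) z (0, 1) :=
  funext fun z => (hasDerivAt_right_fderiv (hf z)).deriv

theorem contDiff_uncurry_pd1 {m n : WithTop ℕ∞} (hf : ContDiff ℝ n (Function.uncurry f))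
    (hmn : m + 1 ≤ n) : ContDiff ℝ m (Function.uncurry (pd1 f)) := by
  rw [uncurry_pd1_eq_fderiv (hf.differentiable (by rintro rfl; simp at hmn))]
  exact (hf.fderiv_right hmn).clm_apply contDiff_const

theorem contDiff_uncurry_pd2 {m n : WithTop ℕ∞} (hf : ContDiff ℝ n (Function.uncurry f))
    (hmn : m + 1 ≤ n) : ContDiff ℝ m (Function.uncurry (pd2 f)) := by
  rw [uncurry_pd2_eq_fderiv (hf.differentiable (by rintro rfl; simp at hmn))]
  exact (hf.fderiv_right hmn).clm_apply contDiff_const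

theorem pd1_pd2_comm (hf : ContDiff ℝ 2 (Function.uncurry f)) (u x : ℝ) :
    pd1 (pd2 f) u x = pd2 (pd1 f) u x := by
  have hd : Differentiable ℝ (Function.uncurry f) := hf.differentiable two_ne_zero
  have hd₁ := (contDiff_uncurry_pd1 hf one_add_one_eq_two.le).differentiable one_ne_zero
  have hd₂ := (contDiff_uncurry_pd2 hf one_add_one_eq_two.le).differentiable one_ne_zero
  have hsnd (v w : ℝ × ℝ) : fderiv ℝ (fun z => fderiv ℝ (Function.uncurry f) z w) (u, x) v =
      fderiv ℝ (fderiv ℝ (Function.uncurry f)) (u, x) v w := by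
    have hd' : DifferentiableAt ℝ (fderiv ℝ (Function.uncurry f)) (u, x) :=
      (hf.fderiv_right one_add_one_eq_two.le).differentiable one_ne_zero _
    simp [fderiv_clm_apply hd' (differentiableAt_const w)]
  calc pd1 (pd2 f) u x = fderiv ℝ (Function.uncurry (pd2 f)) (u, x) (1, 0) :=
        (hasDerivAt_left_fderiv (hd₂ _)).deriv
    _ = fderiv ℝ (fderiv ℝ (Function.uncurry f)) (u, x) (1, 0) (0, 1) := by
        rw [uncurry_pd2_eq_fderiv hd, hsnd]
    _ = fderiv ℝ (fderiv ℝ (Function.uncurry f)) (u, x) (0, 1) (1, 0) :=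
        hf.contDiffAt.isSymmSndFDerivAt (by simp) _ _
    _ = fderiv ℝ (Function.uncurry (pd1 f)) (u, x) (0, 1) := by
        rw [uncurry_pd1_eq_fderiv hd, hsnd]
    _ = pd2 (pd1 f) u x := (hasDerivAt_right_fderiv (hd₁ _)).deriv.symm

theorem monotoneOn_Ici_of_pd1_nonneg (hf : Differentiable ℝ (Function.uncurry f)) {u₀ x : ℝ}
    (h : ∀ u, u₀ ≤ u → 0 ≤ pd1 f u x) : MonotoneOn (fun u => f u x) (Ici u₀) :=
  monotoneOn_of_deriv_nonneg (convex_Ici u₀)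
    (fun _ _ => (hasDerivAt_left_fderiv (hf _)).continuousAt.continuousWithinAt)
    (fun _ _ => (hasDerivAt_left_fderiv (hf _)).differentiableAt.differentiableWithinAt)
    (fun u hu => h u (interior_subset hu))

end PartialDerivatives

section Coefficient

variable {N : ℝ → ℝ → ℝ} {a b ξ x : ℝ}

theorem HypH.mono {a' b' : ℝ} (hH : HypH N a b) (h : Icc a' b' ⊆ Icc a b) : HypH N a' b' :=
  fun u hu x hx => hH u hu x (h hx)

theorem alphaC_nonneg (hH : HypH N a b) (hξ : ξ ∈ Icc a b) {p q : ℝ} (hp : 0 ≤ p) (hq : 0 ≤ q)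
    (hx : ξ ≤ x) : 0 ≤ alphaC N ξ p q x := by
  obtain ⟨hN, hN_x, hN_u, -, -⟩ := hH q hq ξ hξ
  have := sub_nonneg.2 hx
  unfold alphaC
  positivity

theorem alphaC_mono (hN : ContDiff ℝ 2 (Function.uncurry N)) (hH : HypH N a b) (hξ : ξ ∈ Icc a b)
    {p₁ p₂ q₁ q₂ : ℝ} (hp₁ : 0 ≤ p₁) (hp : p₁ ≤ p₂) (hq₁ : 0 ≤ q₁) (hq : q₁ ≤ q₂) (hx : ξ ≤ x) :
    alphaC N ξ p₁ q₁ x ≤ alphaC N ξ p₂ q₂ x := by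
  have hq₂ : 0 ≤ q₂ := hq₁.trans hq
  have hN_mono : N q₁ ξ ≤ N q₂ ξ :=
    monotoneOn_Ici_of_pd1_nonneg (hN.differentiable two_ne_zero)
      (fun u hu => (hH u hu ξ hξ).2.2.1) hq₁ hq₂ hq
  have hN_u_mono : pd1 N q₁ ξ ≤ pd1 N q₂ ξ :=
    monotoneOn_Ici_of_pd1_nonneg
      ((contDiff_uncurry_pd1 hN one_add_one_eq_two.le).differentiable one_ne_zero)
      (fun u hu => (hH u hu ξ hξ).2.2.2.2) hq₁ hq₂ hq
  have hN_x_mono : pd2 N q₁ ξ ≤ pd2 N q₂ ξ :=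
    monotoneOn_Ici_of_pd1_nonneg
      ((contDiff_uncurry_pd2 hN one_add_one_eq_two.le).differentiable one_ne_zero)
      (fun u hu => (pd1_pd2_comm hN u ξ).symm ▸ (hH u hu ξ hξ).2.2.2.1) hq₁ hq₂ hq
  have hN_u : 0 ≤ pd1 N q₂ ξ := (hH q₂ hq₂ ξ hξ).2.2.1
  have := sub_nonneg.2 hx
  unfold alphaC
  gcongr

theorem continuous_alphaC (hN : ContDiff ℝ 1 (Function.uncurry N)) (ξ : ℝ) :
    Continuous fun z : (ℝ × ℝ) × ℝ => alphaC N ξ z.1.2 z.1.1 z.2 := by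
  have hN_u : Continuous (Function.uncurry (pd1 N)) :=
    (contDiff_uncurry_pd1 hN (zero_add 1).le).continuous
  have hN_x : Continuous (Function.uncurry (pd2 N)) :=
    (contDiff_uncurry_pd2 hN (zero_add 1).le).continuous
  have hξ : Continuous fun z : (ℝ × ℝ) × ℝ => (z.1.1, ξ) := by fun_prop
  exact ((((hN_u.comp hξ).mul (by fun_prop)).add (hN_x.comp hξ)).mul (by fun_prop)).add
    (hN.continuous.comp hξ)

end Coefficient

section SecondOrder

/-- `u` is twice differentiable on `s`, with derivatives `u'` and `u''` taken within `s`. This is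
`IsC2On` without the continuity of `u''`, so that it can be checked one subinterval at a time. -/
def HasSecondDerivOn (u u' u'' : ℝ → ℝ) (s : Set ℝ) : Prop :=
  ∀ x ∈ s, HasDerivWithinAt u (u' x) s x ∧ HasDerivWithinAt u' (u'' x) s x

variable {w w' w'' u u' v v' α β : ℝ → ℝ} {a b : ℝ}

theorem HasSecondDerivOn.mono {s t : Set ℝ} (hw : HasSecondDerivOn w w' w'' t) (hst : s ⊆ t) :
    HasSecondDerivOn w w' w'' s :=
  fun x hx => ⟨(hw x (hst hx)).1.mono hst, (hw x (hst hx)).2.mono hst⟩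

theorem HasSecondDerivOn.monotoneOn_deriv_of_deriv_nonneg (hw : HasSecondDerivOn w w' w'' (Icc a b))
    (hw'' : ∀ x ∈ Icc a b, 0 ≤ w x → 0 ≤ w'' x) (ha : 0 ≤ w a) (hw' : ∀ x ∈ Ioo a b, 0 ≤ w' x) :
    MonotoneOn w' (Icc a b) := by
  have hint : interior (Icc a b) ⊆ Icc a b := interior_subset
  have hw_mono : MonotoneOn w (Icc a b) :=
    monotoneOn_of_hasDerivWithinAt_nonneg (convex_Icc a b)
      (fun x hx => (hw x hx).1.continuousWithinAt) (fun x hx => (hw x (hint hx)).1.mono hint)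
      (fun x hx => hw' x (by rwa [interior_Icc] at hx))
  have hw_nonneg : ∀ x ∈ Icc a b, 0 ≤ w x := fun x hx =>
    ha.trans (hw_mono (left_mem_Icc.2 (hx.1.trans hx.2)) hx hx.1)
  exact monotoneOn_of_hasDerivWithinAt_nonneg (convex_Icc a b)
    (fun x hx => (hw x hx).2.continuousWithinAt) (fun x hx => (hw x (hint hx)).2.mono hint)
    (fun x hx => hw'' x (hint hx) (hw_nonneg x (hint hx)))

theorem HasSecondDerivOn.monotoneOn_deriv (hw : HasSecondDerivOn w w' w'' (Icc a b))
    (hw'' : ∀ x ∈ Icc a b, 0 ≤ w x → 0 ≤ w'' x) (ha : 0 ≤ w a) (ha' : 0 < w' a) :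
    MonotoneOn w' (Icc a b) := by
  suffices hpos : ∀ x ∈ Icc a b, 0 < w' x from
    hw.monotoneOn_deriv_of_deriv_nonneg hw'' ha fun x hx => (hpos x (Ioo_subset_Icc_self hx)).le
  by_contra! hne
  have hcompact : IsCompact (Icc a b ∩ w' ⁻¹' Iic 0) :=
    isCompact_Icc.of_isClosed_subset (ContinuousOn.preimage_isClosed_of_isClosed
      (fun x hx => (hw x hx).2.continuousWithinAt) isClosed_Icc isClosed_Iic) inter_subset_left
  obtain ⟨y, ⟨hy, hy0⟩, hy_least⟩ := hcompact.exists_isLeast hne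
  have hpos_before : ∀ x ∈ Ioo a y, 0 < w' x := fun x hx => by
    by_contra! hx0
    exact hx.2.not_ge (hy_least ⟨⟨hx.1.le, hx.2.le.trans hy.2⟩, hx0⟩)
  have hsub : Icc a y ⊆ Icc a b := Icc_subset_Icc_right hy.2
  have hmono : MonotoneOn w' (Icc a y) :=
    (hw.mono hsub).monotoneOn_deriv_of_deriv_nonneg (fun x hx => hw'' x (hsub hx)) ha
      fun x hx => (hpos_before x hx).le
  exact (ha'.trans_le (hmono (left_mem_Icc.2 hy.1) (right_mem_Icc.2 hy.1) hy.1)).not_ge hy0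

theorem HasSecondDerivOn.tangent_le (hw : HasSecondDerivOn w w' w'' (Icc a b))
    (hw' : MonotoneOn w' (Icc a b)) {x : ℝ} (hx : x ∈ Icc a b) :
    w a + w' a * (x - a) ≤ w x := by
  have ha : a ∈ Icc a b := left_mem_Icc.2 (hx.1.trans hx.2)
  have hderiv : ∀ t ∈ interior (Icc a b), HasDerivAt w (w' t) t := fun t ht =>
    (hw t (interior_subset ht)).1.hasDerivAt (mem_interior_iff_mem_nhds.1 ht)
  have := (convex_Icc a b).mul_sub_le_image_sub_of_le_deriv
    (fun t ht => (hw t ht).1.continuousWithinAt)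
    (fun t ht => (hderiv t ht).differentiableAt.differentiableWithinAt)
    (fun t ht => (hderiv t ht).deriv.symm ▸
      hw' ha (interior_subset ht) (interior_subset ht).1) a ha x hx hx.1
  linarith

theorem sub_growth_of_coeff_le
    (hu : HasSecondDerivOn u u' (fun x => α x * u x) (Icc a b))
    (hv : HasSecondDerivOn v v' (fun x => β x * v x) (Icc a b))
    (hβ : ∀ x ∈ Icc a b, 0 ≤ β x) (hαβ : ∀ x ∈ Icc a b, α x ≤ β x)
    (hu_nonneg : ∀ x ∈ Icc a b, 0 ≤ u x) (ha : u a ≤ v a) (ha' : u' a < v' a) :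
    ∀ x ∈ Icc a b, v a - u a + (v' a - u' a) * (x - a) ≤ v x - u x ∧
      v' a - u' a ≤ v' x - u' x := by
  have hw : HasSecondDerivOn (fun x => v x - u x) (fun x => v' x - u' x)
      (fun x => β x * v x - α x * u x) (Icc a b) :=
    fun x hx => ⟨(hv x hx).1.sub (hu x hx).1, (hv x hx).2.sub (hu x hx).2⟩
  have hw' := hw.monotoneOn_deriv
    (fun x hx hx0 => sub_nonneg.2 <|
      mul_le_mul (hαβ x hx) (sub_nonneg.1 hx0) (hu_nonneg x hx) (hβ x hx))
    (sub_nonneg.2 ha) (sub_pos.2 ha')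
  exact fun x hx =>
    ⟨hw.tangent_le hw' hx, hw' (left_mem_Icc.2 (hx.1.trans hx.2)) hx hx.1⟩

end SecondOrder

section ContinuousDependence

theorem tendstoUniformlyOn_of_continuous_uncurry {ι P X Y : Type*} [TopologicalSpace P]
    [TopologicalSpace X] [UniformSpace Y] {f : P → X → Y} (hf : Continuous (Function.uncurry f))
    {K : Set X} (hK : IsCompact K) {l : Filter ι} {p : ι → P} {p₀ : P}
    (hp : Tendsto p l (nhds p₀)) : TendstoUniformlyOn (fun i => f (p i)) (f p₀) l K := by
  intro V hV
  obtain ⟨s, hs, hsV⟩ :=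
    hK.mem_uniformity_of_prod (q := p₀) hf.continuousOn (mem_univ p₀) (symm_le_uniformity hV)
  filter_upwards [hp (nhdsWithin_univ p₀ ▸ hs)] with i hi using hsV (p i) hi

variable {E : Type*} [NormedAddCommGroup E] [NormedSpace ℝ E] {a b : ℝ}

theorem norm_sub_le_gronwallBound_of_linear {A B : ℝ → E →L[ℝ] E} {y z : ℝ → E} {δ η K M : ℝ}
    (hy : ∀ t ∈ Icc a b, HasDerivWithinAt y (A t (y t)) (Icc a b) t)
    (hz : ∀ t ∈ Icc a b, HasDerivWithinAt z (B t (z t)) (Icc a b) t)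
    (hA : ∀ t ∈ Icc a b, ‖A t‖ ≤ K) (hAB : ∀ t ∈ Icc a b, ‖A t - B t‖ ≤ η)
    (hzM : ∀ t ∈ Icc a b, ‖z t‖ ≤ M) (ha : ‖y a - z a‖ ≤ δ) :
    ∀ t ∈ Icc a b, ‖y t - z t‖ ≤ gronwallBound δ K (η * M) (t - a) := by
  refine norm_le_gronwallBound_of_norm_deriv_right_le
    (fun t ht => ((hy t ht).sub (hz t ht)).continuousWithinAt)
    (fun t ht => ((hy t (Ico_subset_Icc_self ht)).sub
      (hz t (Ico_subset_Icc_self ht))).mono_of_mem_nhdsWithin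
        (mem_of_superset (Icc_mem_nhdsGE ht.2) (Icc_subset_Icc_left ht.1))) ha fun t ht => ?_
  have ht' := Ico_subset_Icc_self ht
  calc ‖A t (y t) - B t (z t)‖ = ‖A t (y t - z t) + (A t - B t) (z t)‖ := by
        rw [map_sub, sub_apply, sub_add_sub_cancel]
    _ ≤ ‖A t (y t - z t)‖ + ‖(A t - B t) (z t)‖ := norm_add_le _ _
    _ ≤ K * ‖y t - z t‖ + η * M :=
        add_le_add ((A t).le_of_opNorm_le (hA t ht') _)
          ((A t - B t).le_of_opNorm_le_of_le (hAB t ht') (hzM t ht'))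

theorem tendstoUniformlyOn_of_linear {ι : Type*} {l : Filter ι} {A : ι → ℝ → E →L[ℝ] E}
    {A₀ : ℝ → E →L[ℝ] E} {y : ι → ℝ → E} {y₀ : ℝ → E}
    (hA₀ : ContinuousOn A₀ (Icc a b)) (hA : TendstoUniformlyOn A A₀ l (Icc a b))
    (hy₀ : ∀ t ∈ Icc a b, HasDerivWithinAt y₀ (A₀ t (y₀ t)) (Icc a b) t)
    (hy : ∀ᶠ i in l, ∀ t ∈ Icc a b, HasDerivWithinAt (y i) (A i t (y i t)) (Icc a b) t)
    (ha : Tendsto (fun i => y i a) l (nhds (y₀ a))) :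
    TendstoUniformlyOn y y₀ l (Icc a b) := by
  obtain ⟨K, hK⟩ := isCompact_Icc.exists_bound_of_continuousOn hA₀
  obtain ⟨M, hM⟩ := isCompact_Icc.exists_bound_of_continuousOn
    (fun t ht => (hy₀ t ht).continuousWithinAt)
  rw [Metric.tendstoUniformlyOn_iff] at hA ⊢
  intro ε hε
  have hbound : Tendsto (fun σ => gronwallBound σ (|K| + 1) (σ * |M|) (b - a)) (nhds 0)
      (nhds 0) := by
    simp only [gronwallBound_of_K_ne_0 (show |K| + 1 ≠ 0 by positivity)]
    exact Continuous.tendsto' (by fun_prop) 0 0 (by simp)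
  obtain ⟨σ, hσε, hσ0, hσ1⟩ := (((hbound.eventually_lt_const hε).filter_mono
    nhdsWithin_le_nhds).and (Ioo_mem_nhdsGT zero_lt_one)).exists
  filter_upwards [hy, hA σ hσ0, Metric.tendsto_nhds.1 ha σ hσ0] with i hyi hAi hai t ht
  have hA_sub : ∀ s ∈ Icc a b, ‖A i s - A₀ s‖ ≤ σ := fun s hs => by
    rw [← dist_eq_norm, dist_comm]
    exact (hAi s hs).le
  have hA_norm : ∀ s ∈ Icc a b, ‖A i s‖ ≤ |K| + 1 := fun s hs => by
    linarith [norm_le_norm_add_norm_sub (A₀ s) (A i s), norm_sub_rev (A₀ s) (A i s),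
      hA_sub s hs, hK s hs, le_abs_self K]
  rw [dist_comm, dist_eq_norm]
  calc ‖y i t - y₀ t‖ ≤ gronwallBound σ (|K| + 1) (σ * |M|) (t - a) :=
        norm_sub_le_gronwallBound_of_linear hyi hy₀ hA_norm hA_sub
          (fun s hs => (hM s hs).trans (le_abs_self M)) (dist_eq_norm (y i a) _ ▸ hai.le) t ht
    _ ≤ gronwallBound σ (|K| + 1) (σ * |M|) (b - a) :=
        gronwallBound_mono hσ0.le (by positivity) (by positivity) (by linarith [ht.2])
    _ < ε := hσε

/-- The companion operator of `u'' = k u`, acting on the phase space of pairs `(u, u')`. -/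
def companion (k : ℝ) : ℝ × ℝ →L[ℝ] ℝ × ℝ :=
  (ContinuousLinearMap.snd ℝ ℝ ℝ).prod (k • ContinuousLinearMap.fst ℝ ℝ ℝ)

theorem continuous_companion : Continuous companion :=
  (ContinuousLinearMap.prodₗᵢ ℝ).continuous.comp (f := fun k : ℝ =>
    (ContinuousLinearMap.snd ℝ ℝ ℝ, k • ContinuousLinearMap.fst ℝ ℝ ℝ)) (by fun_prop)

theorem HasSecondDerivOn.hasDerivWithinAt_prodMk {u u' α : ℝ → ℝ} {s : Set ℝ}
    (hu : HasSecondDerivOn u u' (fun x => α x * u x) s) {x : ℝ} (hx : x ∈ s) :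
    HasDerivWithinAt (fun x => (u x, u' x)) (companion (α x) (u x, u' x)) s x :=
  (hu x hx).1.prodMk (hu x hx).2

end ContinuousDependence

section Scheme

variable {N : ℝ → ℝ → ℝ} {m : Mesh} {u u' v v' : ℝ → ℝ}

theorem Mesh.monotoneOn_pt (m : Mesh) : MonotoneOn m.pt (Iic m.n) :=
  (strictMonoOn_of_lt_add_one ordConnected_Iic fun i _ _ hi => m.mono i hi).monotoneOn

theorem Mesh.pt_mem_Icc (m : Mesh) {i : ℕ} (hi : i ≤ m.n) : m.pt i ∈ Icc (m.pt 0) (m.pt m.n) :=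
  ⟨m.monotoneOn_pt (Nat.zero_le _) hi (Nat.zero_le i), m.monotoneOn_pt hi self_mem_Iic hi⟩

theorem Mesh.Icc_pt_subset (m : Mesh) {i : ℕ} (hi : i < m.n) :
    Icc (m.pt i) (m.pt (i + 1)) ⊆ Icc (m.pt 0) (m.pt m.n) :=
  Icc_subset_Icc (m.pt_mem_Icc hi.le).1 (m.pt_mem_Icc hi).2

theorem Mesh.forall_mem_Icc (m : Mesh) {P : ℝ → Prop} (zero : P (m.pt 0))
    (step : ∀ i < m.n, P (m.pt i) → ∀ x ∈ Icc (m.pt i) (m.pt (i + 1)), P x) :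
    ∀ x ∈ Icc (m.pt 0) (m.pt m.n), P x := by
  suffices ∀ i ≤ m.n, ∀ x ∈ Icc (m.pt 0) (m.pt i), P x from this m.n le_rfl
  intro i
  induction i with
  | zero => exact fun _ x hx => le_antisymm hx.2 hx.1 ▸ zero
  | succ i ih =>
    intro hi x hx
    have hi' : i ≤ m.n := Nat.le_of_succ_le hi
    rcases le_total x (m.pt i) with hxi | hix
    · exact ih hi' x ⟨hx.1, hxi⟩
    · exact step i hi (ih hi' _ (right_mem_Icc.2 (m.pt_mem_Icc hi').1)) x ⟨hix, hx.2⟩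

theorem IsStraightSol.zero (N : ℝ → ℝ → ℝ) (a c : ℝ) (m : Mesh) : IsStraightSol N a c m 0 0 :=
  ⟨fun x _ => hasDerivWithinAt_const x _ 0, continuousOn_const, fun i _ x _ => by
    rw [Pi.zero_apply x, mul_zero]
    exact hasDerivWithinAt_const x _ 0⟩

theorem IsStraightSol.hasSecondDerivOn (hu : IsStraightSol N (m.pt 0) (m.pt m.n) m u u') {i : ℕ}
    (hi : i < m.n) :
    HasSecondDerivOn u u' (fun x => alphaC N (m.pt i) (u' (m.pt i)) (u (m.pt i)) x * u x)
      (Icc (m.pt i) (m.pt (i + 1))) :=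
  fun x hx => ⟨(hu.1 x (m.Icc_pt_subset hi hx)).mono (m.Icc_pt_subset hi), hu.2.2 i hi x hx⟩

theorem IsStraightSol.tendsto {ι : Type*} {l : Filter ι} {U U' : ι → ℝ → ℝ}
    (hN : ContDiff ℝ 1 (Function.uncurry N)) (hv : IsStraightSol N (m.pt 0) (m.pt m.n) m v v')
    (hU : ∀ᶠ s in l, IsStraightSol N (m.pt 0) (m.pt m.n) m (U s) (U' s))
    (h0 : Tendsto (fun s => (U s (m.pt 0), U' s (m.pt 0))) l (nhds (v (m.pt 0), v' (m.pt 0)))) :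
    ∀ x ∈ Icc (m.pt 0) (m.pt m.n),
      Tendsto (fun s => (U s x, U' s x)) l (nhds (v x, v' x)) := by
  refine m.forall_mem_Icc h0 fun i hi ih x hx => ?_
  have hcoeff : Continuous (Function.uncurry fun (y : ℝ × ℝ) x =>
      companion (alphaC N (m.pt i) y.2 y.1 x)) :=
    continuous_companion.comp (continuous_alphaC hN (m.pt i))
  exact (tendstoUniformlyOn_of_linear
    (hcoeff.comp (Continuous.prodMk_right (v (m.pt i), v' (m.pt i)))).continuousOn
    (tendstoUniformlyOn_of_continuous_uncurry hcoeff isCompact_Icc ih)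
    (fun x hx => (hv.hasSecondDerivOn hi).hasDerivWithinAt_prodMk hx)
    (hU.mono fun s hs x hx => (hs.hasSecondDerivOn hi).hasDerivWithinAt_prodMk hx)
    ih).tendsto_at hx

theorem IsStraightSol.eqOn (hN : ContDiff ℝ 1 (Function.uncurry N))
    (hu : IsStraightSol N (m.pt 0) (m.pt m.n) m u u')
    (hv : IsStraightSol N (m.pt 0) (m.pt m.n) m v v')
    (h0 : (u (m.pt 0), u' (m.pt 0)) = (v (m.pt 0), v' (m.pt 0))) :
    EqOn (fun x => (u x, u' x)) (fun x => (v x, v' x)) (Icc (m.pt 0) (m.pt m.n)) := fun x hx =>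
  -- Continuous dependence for a constant family yields uniqueness.
  tendsto_nhds_unique (tendsto_const_nhds (f := (atTop : Filter ℕ)))
    (hv.tendsto hN (Eventually.of_forall fun _ => hu) (h0 ▸ tendsto_const_nhds) x hx)

theorem IsStraightSol.sub_growth (hN : ContDiff ℝ 2 (Function.uncurry N))
    (hH : HypH N (m.pt 0) (m.pt m.n)) (hu : IsStraightSol N (m.pt 0) (m.pt m.n) m u u')
    (hv : IsStraightSol N (m.pt 0) (m.pt m.n) m v v')
    (hu_nonneg : ∀ x ∈ Icc (m.pt 0) (m.pt m.n), 0 ≤ u x ∧ 0 ≤ u' x)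
    (h0 : u (m.pt 0) ≤ v (m.pt 0)) (h0' : u' (m.pt 0) < v' (m.pt 0)) :
    ∀ x ∈ Icc (m.pt 0) (m.pt m.n),
      (v' (m.pt 0) - u' (m.pt 0)) * (x - m.pt 0) ≤ v x - u x ∧
      v' (m.pt 0) - u' (m.pt 0) ≤ v' x - u' x := by
  have hd : 0 < v' (m.pt 0) - u' (m.pt 0) := sub_pos.2 h0'
  refine m.forall_mem_Icc (by simpa using h0) fun i hi ⟨ih, ih'⟩ x hx => ?_
  have hξ := m.pt_mem_Icc hi.le
  obtain ⟨hq, hp⟩ := hu_nonneg _ hξ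
  have huv : u (m.pt i) ≤ v (m.pt i) :=
    sub_nonneg.1 ((mul_nonneg hd.le (sub_nonneg.2 hξ.1)).trans ih)
  have huv' : u' (m.pt i) < v' (m.pt i) := sub_pos.1 (hd.trans_le ih')
  obtain ⟨hgrow, hgrow'⟩ := sub_growth_of_coeff_le (hu.hasSecondDerivOn hi) (hv.hasSecondDerivOn hi)
    (fun x hx => alphaC_nonneg hH hξ (hp.trans huv'.le) (hq.trans huv) hx.1)
    (fun x hx => alphaC_mono hN hH hξ hp huv'.le hq huv hx.1)
    (fun x hx => (hu_nonneg x (m.Icc_pt_subset hi hx)).1) huv huv' x hx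
  refine ⟨?_, ih'.trans hgrow'⟩
  have := mul_le_mul_of_nonneg_right ih' (sub_nonneg.2 hx.1)
  linarith

theorem IsStraightSol.nonneg (hN : ContDiff ℝ 2 (Function.uncurry N))
    (hH : HypH N (m.pt 0) (m.pt m.n)) (hu : IsStraightSol N (m.pt 0) (m.pt m.n) m u u')
    (h0 : u (m.pt 0) = 0) (h0' : 0 ≤ u' (m.pt 0)) :
    ∀ x ∈ Icc (m.pt 0) (m.pt m.n), 0 ≤ u x ∧ 0 ≤ u' x := by
  have hzero := IsStraightSol.zero N (m.pt 0) (m.pt m.n) m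
  intro x hx
  rcases h0'.eq_or_lt with heq | hpos
  · obtain ⟨hux, hux'⟩ := Prod.ext_iff.1 <|
      hu.eqOn (hN.of_le one_le_two) hzero (Prod.ext h0 heq.symm) hx
    exact ⟨hux.ge, hux'.ge⟩
  · obtain ⟨hgrow, hgrow'⟩ := hzero.sub_growth hN hH hu (by simp) h0.ge hpos x hx
    simp only [Pi.zero_apply, sub_zero] at hgrow hgrow'
    exact ⟨(mul_nonneg h0' (sub_nonneg.2 hx.1)).trans hgrow, h0'.trans hgrow'⟩

end Scheme

theorem existsUnique_pos_eq_of_growth {F : ℝ → ℝ} {κ y : ℝ} (hF : ContinuousOn F (Ici 0))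
    (hκ : 0 < κ) (hgrow : ∀ s t, 0 ≤ s → s < t → (t - s) * κ ≤ F t - F s) (hy : F 0 < y) :
    ∃! t, 0 < t ∧ F t = y := by
  have hmono : StrictMonoOn F (Ici 0) := fun s hs t _ hst =>
    sub_pos.1 ((mul_pos (sub_pos.2 hst) hκ).trans_le (hgrow s t hs hst))
  have hT : 0 < (y - F 0) / κ := div_pos (sub_pos.2 hy) hκ
  have hyT : y ≤ F ((y - F 0) / κ) := by
    have := hgrow 0 _ le_rfl hT
    rw [sub_zero, div_mul_cancel₀ _ hκ.ne'] at this
    linarith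
  obtain ⟨t, ht, hty⟩ := intermediate_value_Icc hT.le (hF.mono Icc_subset_Ici_self) ⟨hy.le, hyT⟩
  have ht0 : 0 < t := ht.1.lt_of_ne fun h => hy.ne (h ▸ hty)
  exact ⟨t, ⟨ht0, hty⟩, fun s hs => hmono.injOn hs.1.le ht0.le (hs.2.trans hty.symm)⟩

/-- under hypothesis (H) there is a unique initial slope `ν* > 0` with
`ũ_{ν*}(c) = u_b`. -/
theorem straight_scheme_unique_shooting_slope
    (a b c ub : ℝ) (hab : a < b) (hub : 0 < ub) (hc : c ∈ Ioo a b)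
    (N : ℝ → ℝ → ℝ) (hN : ContDiff ℝ 2 (Function.uncurry N))
    (hH : HypH N a b)
    (ms : Mesh) (hms0 : ms.pt 0 = a) (hmsn : ms.pt ms.n = c)
    (U U' : ℝ → ℝ → ℝ)
    (hU : ∀ ν : ℝ, 0 ≤ ν →
      IsStraightSol N a c ms (U ν) (U' ν) ∧ U ν a = 0 ∧ U' ν a = ν) :
    ∃! ν : ℝ, 0 < ν ∧ U ν c = ub := by
  subst hms0 hmsn
  have hH' : HypH N (ms.pt 0) (ms.pt ms.n) := hH.mono (Icc_subset_Icc_right hc.2.le)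
  have hc_mem : ms.pt ms.n ∈ Icc (ms.pt 0) (ms.pt ms.n) := right_mem_Icc.2 hc.1.le
  refine existsUnique_pos_eq_of_growth (F := fun ν => U ν (ms.pt ms.n)) ?_ (sub_pos.2 hc.1) ?_ ?_
  · intro ν hν
    obtain ⟨hsol, h0, h0'⟩ := hU ν hν
    refine (hsol.tendsto (hN.of_le one_le_two)
      (eventually_mem_nhdsWithin.mono fun s hs => (hU s hs).1) ?_ _ hc_mem).fst_nhds
    have hinit : Tendsto (fun s : ℝ => ((0 : ℝ), s)) (nhdsWithin ν (Ici 0)) (nhds (0, ν)) :=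
      (Continuous.prodMk_right (0 : ℝ)).continuousWithinAt
    rw [h0, h0']
    exact hinit.congr' (eventually_mem_nhdsWithin.mono fun s hs => by simp [hU s hs])
  · intro s t hs hst
    obtain ⟨hsol_s, hs0, hs0'⟩ := hU s hs
    obtain ⟨hsol_t, ht0, ht0'⟩ := hU t (hs.trans hst.le)
    simpa only [hs0', ht0'] using (hsol_s.sub_growth hN hH' hsol_t
      (hsol_s.nonneg hN hH' hs0 (hs0'.symm ▸ hs)) (hs0.trans ht0.symm).le
      (by rwa [hs0', ht0']) _ hc_mem).1
  · obtain ⟨hsol, h0, h0'⟩ := hU 0 le_rfl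
    have hzero := hsol.eqOn (hN.of_le one_le_two) (.zero N _ _ ms) (Prod.ext h0 h0') hc_mem
    exact (Prod.ext_iff.1 hzero).1.trans_lt hub
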